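/- Let (x, y) ∈ E × E with w₁·δ < dist(x, ∂E) and w₁·δ < dist(y, ∂E). Then E[ĥₙ(x, y)] → h(x, y) = p(x) q(x, y) as n → ∞; that is, ĥₙ(x, y) is an asymptotically unbiased estimator of h(x, y). -/

import Mathlib

open MeasureTheory ProbabilityTheory Filter

noncomputable def iterK {S : Type*} [MeasurableSpace S] (R : S → Measure S) : ℕ → S → Measure S
  | 0, y => Measure.dirac y
  | n+1, y => (iterK R n y).bind R

/-! For `j ≥ 2` the pair `(Z⁻ⱼ, Zⱼ)` has, on `E × V`, the density
`hⱼ(u, v) = (∫ r(ξ, u) dLaw(Z⁻ⱼ₋₁)(ξ)) q(u, v)`. The laws of the `Z⁻ⱼ` converge to `π` in total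
variation, and `r` is bounded, so the mixtures `∫ r(ξ, ·) dLaw(Z⁻ⱼ₋₁)(ξ)` converge to `p`
uniformly; since `p` and `q` are continuous, `hⱼ(z)` converges to `h(x, y)` as `j → ∞` and
`z → (x, y)` jointly. The `j`-th term of the estimator is the kernel `K ⊗ K` of bandwidth `wⱼ → 0`
evaluated at `(Z⁻ⱼ, Zⱼ) - (x, y)`, so its expectation is an approximate identity applied to `hⱼ`
at `(x, y)` and tends to `h(x, y)`. Cesàro averaging concludes. -/

open Module Topology Function Set
open scoped ENNReal

section Rescaling

variable {V : Type*} [NormedAddCommGroup V] [NormedSpace ℝ V]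

/-- The kernel `K_s(v) = s^(-dim V) K(v / s)` of bandwidth `s`. -/
noncomputable def rescale (K : V → ℝ) (s : ℝ) (v : V) : ℝ :=
  (s ^ finrank ℝ V)⁻¹ * K (s⁻¹ • v)

lemma rescale_nonneg {K : V → ℝ} (hK : ∀ v, 0 ≤ K v) {s : ℝ} (hs : 0 ≤ s) (v : V) :
    0 ≤ rescale K s v :=
  mul_nonneg (by positivity) (hK _)

lemma support_rescale_subset_ball {K : V → ℝ} {δ : ℝ} (hK : support K ⊆ Metric.ball 0 δ) {s : ℝ}
    (hs : 0 < s) : support (rescale K s) ⊆ Metric.ball 0 (s * δ) := by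
  intro v hv
  have hmem : s⁻¹ • v ∈ Metric.ball 0 δ := hK (right_ne_zero_of_mul hv)
  rwa [mem_ball_zero_iff, norm_smul, norm_inv, Real.norm_of_nonneg hs.le,
    inv_mul_lt_iff₀ hs, ← mem_ball_zero_iff] at hmem

lemma tendsto_support_rescale {ι : Type*} {l : Filter ι} {K : V → ℝ} {δ : ℝ}
    (hK : support K ⊆ Metric.ball 0 δ) {w : ι → ℝ} (hw : Tendsto w l (𝓝[>] 0)) :
    Tendsto (fun i => support (rescale K (w i))) l (𝓝 0).smallSets := by
  obtain ⟨hw0, hwpos⟩ := tendsto_nhdsWithin_iff.1 hw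
  refine tendsto_smallSets_iff.2 fun U hU => ?_
  obtain ⟨ε, hε, hεU⟩ := Metric.mem_nhds_iff.1 hU
  have hwδ : Tendsto (fun i => w i * δ) l (𝓝 0) := by simpa using hw0.mul_const δ
  filter_upwards [hwpos, hwδ.eventually_lt_const hε] with i hpos hlt
  exact (support_rescale_subset_ball hK hpos).trans ((Metric.ball_subset_ball hlt.le).trans hεU)

variable [MeasurableSpace V] [BorelSpace V]

lemma measurable_rescale {K : V → ℝ} (hK : Measurable K) (s : ℝ) : Measurable (rescale K s) :=
  (hK.comp (measurable_const_smul s⁻¹)).const_mul _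

lemma integrable_rescale_comp_sub [SecondCountableTopology V] {Ω : Type*} [MeasurableSpace Ω]
    {P : Measure Ω} [IsFiniteMeasure P] {K : V → ℝ} (hK : Measurable K) {C : ℝ}
    (hKC : ∀ v, |K v| ≤ C) (s : ℝ) {X : Ω → V} (hX : AEMeasurable X P) (z : V) :
    Integrable (fun ω => rescale K s (X ω - z)) P := by
  refine (Integrable.of_bound ?_ C (.of_forall fun ω => hKC _)).const_mul _
  exact (hK.comp_aemeasurable ((hX.sub_const z).const_smul s⁻¹)).aestronglyMeasurable

variable [FiniteDimensional ℝ V] {m : Measure V} [m.IsAddHaarMeasure]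

lemma integral_rescale (K : V → ℝ) {s : ℝ} (hs : 0 < s) :
    ∫ v, rescale K s v ∂m = ∫ v, K v ∂m := by
  simp only [rescale]
  rw [integral_const_mul, Measure.integral_comp_inv_smul_of_nonneg m K hs.le, smul_eq_mul,
    inv_mul_cancel_left₀ (by positivity)]

lemma tendsto_integral_rescale_mul {ι : Type*} {l : Filter ι} {K : V → ℝ} (hK0 : ∀ v, 0 ≤ K v)
    (hK1 : ∫ v, K v ∂m = 1) {δ : ℝ} (hKδ : support K ⊆ Metric.ball 0 δ) {w : ι → ℝ}
    (hw : Tendsto w l (𝓝[>] 0)) {f : ι → V → ℝ} (hf : ∀ i, Measurable (f i)) {z : V} {L : ℝ}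
    (hfL : Tendsto (uncurry f) (l ×ˢ 𝓝 z) (𝓝 L)) :
    Tendsto (fun i => ∫ v, rescale K (w i) (v - z) * f i v ∂m) l (𝓝 L) := by
  have hwpos : ∀ᶠ i in l, 0 < w i := hw.eventually self_mem_nhdsWithin
  have hKneg : support (fun v => K (-v)) ⊆ Metric.ball 0 δ := fun v hv => by simpa using hKδ hv
  have hconv := convolution_tendsto_right (μ := m) (φ := fun i => rescale (fun v => K (-v)) (w i))
    (hwpos.mono fun i hi => rescale_nonneg (fun v => hK0 (-v)) hi.le)
    (hwpos.mono fun i hi => by rw [integral_rescale _ hi, integral_neg_eq_self, hK1])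
    (tendsto_support_rescale hKneg hw) (.of_forall fun i => (hf i).aestronglyMeasurable) hfL
    tendsto_const_nhds
  refine hconv.congr fun i => ?_
  simp only [convolution_lsmul_swap, rescale, ← smul_neg, neg_sub, smul_eq_mul]

end Rescaling

section ProdKernel

/-- The tensor product `K ⊗ K'` of two kernels, a kernel on the product space; it smooths the
empirical law of a pair. -/
def prodKernel {V W : Type*} (K : V → ℝ) (K' : W → ℝ) (z : V × W) : ℝ :=
  K z.1 * K' z.2

lemma prodKernel_nonneg {V W : Type*} {K : V → ℝ} {K' : W → ℝ} (hK : ∀ v, 0 ≤ K v)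
    (hK' : ∀ v, 0 ≤ K' v) (z : V × W) : 0 ≤ prodKernel K K' z :=
  mul_nonneg (hK z.1) (hK' z.2)

lemma prodKernel_le_mul {V W : Type*} {K : V → ℝ} {K' : W → ℝ} (hK : ∀ v, 0 ≤ K v)
    (hK' : ∀ v, 0 ≤ K' v) {C C' : ℝ} (hKC : ∀ v, K v ≤ C) (hKC' : ∀ v, K' v ≤ C') (z : V × W) :
    prodKernel K K' z ≤ C * C' :=
  mul_le_mul (hKC z.1) (hKC' z.2) (hK' z.2) ((hK z.1).trans (hKC z.1))

lemma support_prodKernel_subset_ball {V W : Type*} [SeminormedAddCommGroup V]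
    [SeminormedAddCommGroup W] {K : V → ℝ} {K' : W → ℝ} {δ : ℝ}
    (hK : support K ⊆ Metric.ball 0 δ) (hK' : support K' ⊆ Metric.ball 0 δ) :
    support (prodKernel K K') ⊆ Metric.ball 0 δ := fun z hz => by
  rw [← Prod.mk_zero_zero, ← ball_prod_same]
  exact ⟨hK (left_ne_zero_of_mul hz), hK' (right_ne_zero_of_mul hz)⟩

variable {V W : Type*} [MeasurableSpace V] [MeasurableSpace W]

lemma measurable_prodKernel {K : V → ℝ} {K' : W → ℝ} (hK : Measurable K) (hK' : Measurable K') :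
    Measurable (prodKernel K K') :=
  (hK.comp measurable_fst).mul (hK'.comp measurable_snd)

lemma integral_prodKernel {m : Measure V} [SFinite m] {m' : Measure W} [SFinite m'] (K : V → ℝ)
    (K' : W → ℝ) :
    ∫ z, prodKernel K K' z ∂m.prod m' = (∫ v, K v ∂m) * ∫ v, K' v ∂m' :=
  integral_prod_mul K K'

end ProdKernel

section Density

lemma integral_comp_eq_integral_mul_density {Ω V : Type*} [MeasurableSpace Ω] [MeasurableSpace V]
    {P : Measure Ω} {m : Measure V} {X : Ω → V} (hX : AEMeasurable X P) {U : Set V}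
    {f : V → ℝ} (hf : Measurable f) (hf0 : ∀ v, 0 ≤ f v)
    (hXf : (P.map X).restrict U = (m.restrict U).withDensity fun v => ENNReal.ofReal (f v))
    {g : V → ℝ} (hg : Measurable g) (hgU : support g ⊆ U) :
    ∫ ω, g (X ω) ∂P = ∫ v, g v * f v ∂m := by
  have hgU' : ∀ v ∉ U, g v = 0 := fun v hv => notMem_support.1 fun h => hv (hgU h)
  calc ∫ ω, g (X ω) ∂P = ∫ v in U, g v ∂P.map X := by
        rw [setIntegral_eq_integral_of_forall_compl_eq_zero hgU',
          integral_map hX hg.aestronglyMeasurable]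
    _ = ∫ v in U, g v * f v ∂m := by
        rw [hXf, integral_withDensity_eq_integral_toReal_smul hf.ennreal_ofReal (by simp)]
        simp only [ENNReal.toReal_ofReal (hf0 _), smul_eq_mul, mul_comm]
    _ = ∫ v, g v * f v ∂m :=
        setIntegral_eq_integral_of_forall_compl_eq_zero fun v hv => by rw [hgU' v hv, zero_mul]

theorem tendsto_integral_rescale_comp_sub {Ω V ι : Type*} [MeasurableSpace Ω]
    [NormedAddCommGroup V] [NormedSpace ℝ V] [FiniteDimensional ℝ V] [MeasurableSpace V]
    [BorelSpace V] {m : Measure V} [m.IsAddHaarMeasure] {P : Measure Ω} {l : Filter ι}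
    {K : V → ℝ} (hK : Measurable K) (hK0 : ∀ v, 0 ≤ K v) (hK1 : ∫ v, K v ∂m = 1) {δ : ℝ}
    (hKδ : support K ⊆ Metric.ball 0 δ) {w : ι → ℝ} (hw : Tendsto w l (𝓝[>] 0)) {X : ι → Ω → V}
    (hX : ∀ i, AEMeasurable (X i) P) {U : Set V} (hU : IsOpen U) {z : V} (hz : z ∈ U)
    {f : ι → V → ℝ} (hf : ∀ i, Measurable (f i)) (hf0 : ∀ i v, 0 ≤ f i v)
    (hXf : ∀ i, (P.map (X i)).restrict U =
      (m.restrict U).withDensity fun v => ENNReal.ofReal (f i v))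
    {L : ℝ} (hfL : Tendsto (uncurry f) (l ×ˢ 𝓝 z) (𝓝 L)) :
    Tendsto (fun i => ∫ ω, rescale K (w i) (X i ω - z) ∂P) l (𝓝 L) := by
  refine (tendsto_integral_rescale_mul hK0 hK1 hKδ hw hf hfL).congr' ?_
  have hUz : {v | z + v ∈ U} ∈ 𝓝 (0 : V) :=
    (continuous_const_add z).continuousAt.preimage_mem_nhds (hU.mem_nhds (by simpa using hz))
  filter_upwards [tendsto_smallSets_iff.1 (tendsto_support_rescale hKδ hw) _ hUz] with i hi
  refine (integral_comp_eq_integral_mul_density (hX i) (hf i) (hf0 i) (hXf i)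
    ((measurable_rescale hK _).comp (measurable_sub_const z)) fun v hv => ?_).symm
  simpa using hi hv

lemma restrict_comp_eq_withDensity {α β : Type*} [MeasurableSpace α] [MeasurableSpace β]
    {ν : Measure α} [SFinite ν] {m : Measure β} [SFinite m] {κ : Kernel α β} {E : Set β}
    (hE : MeasurableSet E) {f : α → β → ℝ≥0∞} (hf : Measurable (uncurry f))
    (hκ : ∀ᵐ a ∂ν, (κ a).restrict E = (m.restrict E).withDensity (f a)) :
    (κ ∘ₘ ν).restrict E = (m.restrict E).withDensity fun b => ∫⁻ a, f a b ∂ν := by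
  ext B hB
  calc (κ ∘ₘ ν).restrict E B = ∫⁻ a, (κ a).restrict E B ∂ν := by
        simp only [Measure.restrict_apply hB,
          Measure.bind_apply (hB.inter hE) κ.aemeasurable]
    _ = ∫⁻ a, ∫⁻ b in B, f a b ∂m.restrict E ∂ν :=
        lintegral_congr_ae (hκ.mono fun a ha => by simp only [ha, withDensity_apply _ hB])
    _ = _ := by rw [lintegral_lintegral_swap hf.aemeasurable, withDensity_apply _ hB]

lemma restrict_compProd {α β : Type*} [MeasurableSpace α] [MeasurableSpace β]
    {ν : Measure α} [SFinite ν] {κ : Kernel α β} [IsSFiniteKernel κ] {E : Set α}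
    (hE : MeasurableSet E) : (ν ⊗ₘ κ).restrict (E ×ˢ univ) = ν.restrict E ⊗ₘ κ := by
  ext B hB
  rw [Measure.restrict_apply hB, Measure.compProd_apply hB,
    Measure.compProd_apply (hB.inter (hE.prod .univ)), ← lintegral_indicator hE]
  refine lintegral_congr fun a => ?_
  by_cases ha : a ∈ E <;> simp [ha]

lemma withDensity_compProd {α β : Type*} [MeasurableSpace α] [MeasurableSpace β]
    {μ : Measure α} [SFinite μ] {m : Measure β} [SFinite m] {ρ : α → ℝ≥0∞} (hρ : Measurable ρ)
    {κ : Kernel α β} [IsSFiniteKernel κ] {q : α → β → ℝ≥0∞} (hq : Measurable (uncurry q))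
    (hκ : ∀ a, κ a = m.withDensity (q a)) :
    μ.withDensity ρ ⊗ₘ κ = (μ.prod m).withDensity fun z => ρ z.1 * q z.1 z.2 := by
  refine Measure.ext_of_lintegral _ fun φ hφ => ?_
  have hq' (a : α) : Measurable (q a) := hq.of_uncurry_left
  have hφ' (a : α) : Measurable fun b => φ (a, b) := hφ.comp measurable_prodMk_left
  have hρq : Measurable fun z : α × β => ρ z.1 * q z.1 z.2 := (hρ.comp measurable_fst).mul hq
  rw [Measure.lintegral_compProd hφ,
    lintegral_withDensity_eq_lintegral_mul _ hρ hφ.lintegral_kernel_prod_right',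
    lintegral_withDensity_eq_lintegral_mul _ hρq hφ, lintegral_prod _ (hρq.mul hφ).aemeasurable]
  refine lintegral_congr fun a => ?_
  simp only [Pi.mul_apply, hκ, mul_assoc]
  rw [lintegral_withDensity_eq_lintegral_mul _ (hq' a) (hφ' a)]
  exact (lintegral_const_mul _ ((hq' a).mul (hφ' a))).symm

lemma restrict_comp_compProd_eq_withDensity {α β γ : Type*} [MeasurableSpace α]
    [MeasurableSpace β] [MeasurableSpace γ] {ν : Measure α} [SFinite ν] {m : Measure β} [SFinite m]
    {m' : Measure γ} [SFinite m'] {κ : Kernel α β} [IsSFiniteKernel κ] {η : Kernel β γ}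
    [IsSFiniteKernel η] {E : Set β} (hE : MeasurableSet E) {r : α → β → ℝ}
    (hr : Measurable (uncurry r)) (hr0 : ∀ a b, 0 ≤ r a b)
    (hrν : ∀ b, Integrable (fun a => r a b) ν)
    (hκ : ∀ᵐ a ∂ν, (κ a).restrict E = (m.restrict E).withDensity fun b => ENNReal.ofReal (r a b))
    {q : β → γ → ℝ} (hq : Measurable (uncurry q))
    (hη : ∀ b, η b = m'.withDensity fun c => ENNReal.ofReal (q b c)) :
    ((κ ∘ₘ ν) ⊗ₘ η).restrict (E ×ˢ univ) = ((m.prod m').restrict (E ×ˢ univ)).withDensity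
      fun z => ENNReal.ofReal ((∫ a, r a z.1 ∂ν) * q z.1 z.2) := by
  have hmix : (κ ∘ₘ ν).restrict E =
      (m.restrict E).withDensity fun b => ENNReal.ofReal (∫ a, r a b ∂ν) := by
    rw [restrict_comp_eq_withDensity hE hr.ennreal_ofReal hκ]
    simp only [ofReal_integral_eq_lintegral_ofReal (hrν _) (.of_forall fun a => hr0 a _)]
  have hmeas : Measurable fun b => ENNReal.ofReal (∫ a, r a b ∂ν) :=
    (hr.stronglyMeasurable.integral_prod_left').measurable.ennreal_ofReal
  rw [restrict_compProd hE, hmix, withDensity_compProd hmeas hq.ennreal_ofReal hη,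
    ← Measure.prod_restrict, Measure.restrict_univ]
  simp only [ENNReal.ofReal_mul (integral_nonneg fun a => hr0 a _)]

lemma restrict_eq_withDensity_of_forall_subset {α : Type*} [MeasurableSpace α] {ν m : Measure α}
    {E : Set α} (hE : MeasurableSet E) {f : α → ℝ≥0∞}
    (h : ∀ B ⊆ E, MeasurableSet B → ν B = ∫⁻ a in B, f a ∂m) :
    ν.restrict E = (m.restrict E).withDensity f := by
  ext B hB
  rw [Measure.restrict_apply hB, withDensity_apply _ hB, Measure.restrict_restrict hB,
    h _ inter_subset_right (hB.inter hE)]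

lemma measurable_of_forall_eq_setLIntegral {α β : Type*} [MeasurableSpace α] [MeasurableSpace β]
    {m : Measure β} [SFinite m] {ν : α → Measure β} {f : α → β → ℝ≥0∞}
    (hf : Measurable (uncurry f))
    (h : ∀ a B, MeasurableSet B → ν a B = ∫⁻ b in B, f a b ∂m) : Measurable ν :=
  Measure.measurable_of_measurable_coe _ fun B hB => by
    simp only [h _ B hB]
    exact hf.lintegral_prod_right'

end Density

section Continuity

lemma continuousAt_of_abs_sub_le {α : Type*} [PseudoMetricSpace α] {f : α → ℝ} {s : Set α} {L : ℝ}
    (hf : ∀ b ∈ s, ∀ b' ∈ s, |f b' - f b| ≤ L * dist b' b) {a : α} (ha : s ∈ 𝓝 a) :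
    ContinuousAt f a :=
  (LipschitzOnWith.of_dist_le' fun b' hb' b hb => hf b hb b' hb').continuousOn.continuousAt ha

lemma continuous_uncurry_of_abs_sub_le {α β : Type*} [PseudoMetricSpace α] [PseudoMetricSpace β]
    {f : α → β → ℝ} {L L' : ℝ} (hf : ∀ a a' b, |f a' b - f a b| ≤ L * dist a' a)
    (hf' : ∀ a b b', |f a b' - f a b| ≤ L' * dist b' b) : Continuous (uncurry f) :=
  (LipschitzWith.uncurry (fun b => .of_dist_le' fun a' a => hf a a' b)
    (fun a => .of_dist_le' fun b' b => hf' a b b')).continuous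

end Continuity

section TotalVariation

lemma abs_integral_sub_integral_le {α : Type*} [MeasurableSpace α] {ν π : Measure α}
    [IsFiniteMeasure ν] [IsFiniteMeasure π] {f : α → ℝ} (hf : Measurable f) (hf0 : ∀ a, 0 ≤ f a)
    {C : ℝ} (hfC : ∀ a, f a ≤ C) {ε : ℝ}
    (h : ∀ B, MeasurableSet B → |ν.real B - π.real B| ≤ ε) :
    |∫ a, f a ∂ν - ∫ a, f a ∂π| ≤ ε * max C 0 := by
  have hlayer (η : Measure α) [IsFiniteMeasure η] :
      ∫ a, f a ∂η = ∫ t in Ioc 0 C, η.real {a | t ≤ f a} :=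
    (Integrable.of_mem_Icc 0 C hf.aemeasurable
      (.of_forall fun a => ⟨hf0 a, hfC a⟩)).integral_eq_integral_Ioc_meas_le
      (.of_forall hf0) (.of_forall hfC)
  have hlevel (η : Measure α) [IsFiniteMeasure η] :
      IntegrableOn (fun t => η.real {a | t ≤ f a}) (Ioc 0 C) := by
    have hanti : Antitone fun t => η.real {a | t ≤ f a} := fun s t hst =>
      measureReal_mono fun a (ha : t ≤ f a) => hst.trans ha
    exact (hanti.locallyIntegrable.integrableOn_isCompact isCompact_Icc).mono_set
      Ioc_subset_Icc_self
  rw [hlayer ν, hlayer π, ← integral_sub (hlevel ν) (hlevel π)]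
  have hbound : ∀ t ∈ Ioc 0 C, ‖ν.real {a | t ≤ f a} - π.real {a | t ≤ f a}‖ ≤ ε :=
    fun t _ => h _ (measurableSet_le measurable_const hf)
  simpa using norm_setIntegral_le_of_norm_le_const (μ := volume) (by simp) hbound

lemma tendstoUniformly_integral {α β ι : Type*} [MeasurableSpace α] {l : Filter ι}
    {ν : ι → Measure α} [∀ i, IsFiniteMeasure (ν i)] {π : Measure α} [IsFiniteMeasure π]
    (hν : TendstoUniformlyOn (fun i B => (ν i).real B) (fun B => π.real B) l {B | MeasurableSet B})
    {r : α → β → ℝ} (hr : ∀ b, Measurable fun a => r a b) (hr0 : ∀ a b, 0 ≤ r a b) {C : ℝ}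
    (hrC : ∀ a b, r a b ≤ C) :
    TendstoUniformly (fun i b => ∫ a, r a b ∂ν i) (fun b => ∫ a, r a b ∂π) l := by
  rw [Metric.tendstoUniformly_iff]
  rw [Metric.tendstoUniformlyOn_iff] at hν
  intro ε hε
  have hM : 0 < max C 0 + 1 := by positivity
  filter_upwards [hν (ε / (max C 0 + 1)) (by positivity)] with i hi b
  have hle := abs_integral_sub_integral_le (ν := π) (π := ν i) (hr b) (fun a => hr0 a b)
    (fun a => hrC a b) fun B hB => (hi B hB).le
  refine hle.trans_lt ?_
  rw [div_mul_eq_mul_div, div_lt_iff₀ hM]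
  gcongr
  exact lt_add_one _

lemma tendsto_integral_mul_prod_nhds {α V W ι : Type*} [MeasurableSpace α] [TopologicalSpace V]
    [FirstCountableTopology V] [TopologicalSpace W] {l : Filter ι} {ν : ι → Measure α}
    [∀ i, IsFiniteMeasure (ν i)] {π : Measure α} [IsFiniteMeasure π]
    (hν : TendstoUniformlyOn (fun i B => (ν i).real B) (fun B => π.real B) l {B | MeasurableSet B})
    {r : α → V → ℝ} (hr : ∀ v, Measurable fun a => r a v) (hr0 : ∀ a v, 0 ≤ r a v) {C : ℝ}
    (hrC : ∀ a v, r a v ≤ C) {x : V} (hrx : ∀ᵐ a ∂π, ContinuousAt (r a) x) {q : V → W → ℝ} {y : W}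
    (hq : ContinuousAt (uncurry q) (x, y)) :
    Tendsto (uncurry fun i (z : V × W) => (∫ a, r a z.1 ∂ν i) * q z.1 z.2) (l ×ˢ 𝓝 (x, y))
      (𝓝 ((∫ a, r a x ∂π) * q x y)) := by
  have hp : ContinuousAt (fun v => ∫ a, r a v ∂π) x :=
    continuousAt_of_dominated (.of_forall fun v => (hr v).aestronglyMeasurable)
      (.of_forall fun v => .of_forall fun a => by
        rw [Real.norm_of_nonneg (hr0 a v)]; exact hrC a v)
      (integrable_const C) hrx
  have hunif := tendstoUniformly_integral hν hr hr0 hrC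
  have hsnd : Tendsto Prod.snd (l ×ˢ 𝓝 (x, y)) (𝓝 (x, y)) := tendsto_snd
  have hunif' : TendstoUniformly (fun (j : ι × (V × W)) v => ∫ a, r a v ∂ν j.1)
      (fun v => ∫ a, r a v ∂π) (l ×ˢ 𝓝 (x, y)) := fun u hu => tendsto_fst.eventually (hunif u hu)
  exact (hunif'.tendsto_comp hp (continuous_fst.continuousAt.tendsto.comp hsnd)).mul
    (hq.tendsto.comp hsnd)

end TotalVariation

section CondDistrib

variable {Ω α β : Type*} [MeasurableSpace α] [MeasurableSpace β]

lemma hasCondDistrib_of_condExp {m mΩ : MeasurableSpace Ω} {P : Measure Ω} [IsFiniteMeasure P]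
    (hm : m ≤ mΩ) {X : Ω → α} {Y : Ω → β}
    (hX : Measurable[m] X) (hY : Measurable Y) {κ : Kernel α β} [IsFiniteKernel κ]
    (h : ∀ g : β → ℝ, Measurable g → (∃ C, ∀ b, |g b| ≤ C) →
      P[fun ω => g (Y ω) | m] =ᵐ[P] fun ω => ∫ b, g b ∂κ (X ω)) :
    HasCondDistrib Y X κ P := by
  have hXΩ : Measurable[mΩ] X := hX.mono hm le_rfl
  have hpair : Measurable[mΩ] fun ω => (X ω, Y ω) := hXΩ.prodMk hY
  refine ⟨hpair.aemeasurable, Measure.ext_prod fun {s t} hs ht => ?_⟩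
  have hsX : MeasurableSet[m] (X ⁻¹' s) := hX hs
  have hcond := h (t.indicator 1) (measurable_one.indicator ht)
    ⟨1, fun b => by by_cases hb : b ∈ t <;> simp [hb]⟩
  have hreal : P.real (X ⁻¹' s ∩ Y ⁻¹' t) = ∫ ω in X ⁻¹' s, (κ (X ω)).real t ∂P := by
    calc P.real (X ⁻¹' s ∩ Y ⁻¹' t) = ∫ ω in X ⁻¹' s, (Y ⁻¹' t).indicator 1 ω ∂P := by
          rw [integral_indicator_one (hY ht), measureReal_restrict_apply (hY ht), inter_comm]
      _ = ∫ ω in X ⁻¹' s, P[fun ω => t.indicator 1 (Y ω) | m] ω ∂P :=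
          (setIntegral_condExp hm (integrable_indicator_iff (hY ht) |>.2
            (integrable_const 1).integrableOn) hsX).symm
      _ = ∫ ω in X ⁻¹' s, (κ (X ω)).real t ∂P := by
          refine setIntegral_congr_ae (hXΩ hs) (hcond.mono fun ω hω _ => ?_)
          exact hω.trans (integral_indicator_one ht)
  have hκt : Measurable fun a => κ a t := κ.measurable_coe ht
  have hκX : Measurable[mΩ] fun ω => κ (X ω) t := hκt.comp hXΩ
  have hcomp : (P.map X ⊗ₘ κ).real (s ×ˢ t) = ∫ ω in X ⁻¹' s, (κ (X ω)).real t ∂P := by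
    simp only [Measure.real, Measure.compProd_apply_prod hs ht, setLIntegral_map hs hκt hXΩ]
    rw [integral_toReal hκX.aemeasurable (.of_forall fun ω => measure_lt_top _ _)]
  rw [← measureReal_eq_measureReal_iff, map_measureReal_apply hpair (hs.prod ht),
    mk_preimage_prod, hreal, hcomp]

lemma map_eq_comp_of_hasCondDistrib [MeasurableSpace Ω] {P : Measure Ω} [SFinite P] {X : Ω → α}
    {Y : Ω → β} {κ : Kernel α β} [IsSFiniteKernel κ]
    (h : HasCondDistrib Y X κ P) : P.map Y = κ ∘ₘ P.map X := by
  rw [← Measure.snd_compProd, ← h.map_eq, Measure.snd_map_prodMk₀ h.aemeasurable_fst]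

lemma measurable_iSup_comap {X : ℕ → Ω → α} {n : ℕ} (hn : 1 ≤ n) :
    Measurable[⨆ i : Fin n, MeasurableSpace.comap (X (i.1 + 1)) inferInstance] (X n) := by
  obtain ⟨k, rfl⟩ := Nat.exists_eq_add_of_le' hn
  exact Measurable.of_comap_le
    (le_iSup (fun i : Fin (k + 1) => MeasurableSpace.comap (X (i.1 + 1)) _) (Fin.last k))

lemma iSup_comap_le [mΩ : MeasurableSpace Ω] {ι : Type*} {X : ι → Ω → α}
    (hX : ∀ i, Measurable (X i)) :
    ⨆ i, MeasurableSpace.comap (X i) inferInstance ≤ mΩ :=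
  iSup_le fun i => (hX i).comap_le

lemma ae_map_mem_closure [MeasurableSpace Ω] {P : Measure Ω} {α : Type*} [TopologicalSpace α]
    [MeasurableSpace α] [OpensMeasurableSpace α] {X : Ω → α} (hX : Measurable X) {E : Set α}
    (hXE : ∀ ω, X ω ∈ closure E) : ∀ᵐ a ∂P.map X, a ∈ closure E :=
  (ae_map_iff hX.aemeasurable isClosed_closure.measurableSet).2 (.of_forall hXE)

end CondDistrib

section IterK

variable {S : Type*} [MeasurableSpace S]

lemma measurable_iterK {R : S → Measure S} (hR : Measurable R) (n : ℕ) :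
    Measurable (iterK R n) := by
  induction n with
  | zero => exact Measure.measurable_dirac
  | succ n ih => exact (Measure.measurable_bind' hR).comp ih

instance isProbabilityMeasure_iterK (R : Kernel S S) [IsMarkovKernel R] (n : ℕ) (s : S) :
    IsProbabilityMeasure (iterK R n s) := by
  induction n with
  | zero => exact Measure.dirac.isProbabilityMeasure
  | succ n ih => exact inferInstanceAs (IsProbabilityMeasure (R ∘ₘ iterK R n s))

lemma map_succ_eq_bind_iterK {Ω : Type*} [MeasurableSpace Ω] {P : Measure Ω} [IsFiniteMeasure P]
    {X : ℕ → Ω → S} {R : Kernel S S} [IsSFiniteKernel R]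
    (hR : ∀ n, 1 ≤ n → HasCondDistrib (X (n + 1)) (X n) R P) (n : ℕ) :
    P.map (X (n + 1)) = (P.map (X 1)).bind (iterK R n) := by
  induction n with
  | zero => exact Measure.bind_dirac.symm
  | succ n ih =>
    rw [map_eq_comp_of_hasCondDistrib (hR (n + 1) n.succ_pos), ih,
      Measure.bind_bind (measurable_iterK R.measurable n).aemeasurable R.aemeasurable]
    rfl

lemma abs_real_bind_sub_le {α β : Type*} [MeasurableSpace α] [MeasurableSpace β] {ν : Measure α}
    [IsProbabilityMeasure ν] {N : α → Measure β} (hN : Measurable N)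
    [∀ a, IsProbabilityMeasure (N a)] {B : Set β} (hB : MeasurableSet B) {b c : ℝ}
    (h : ∀ᵐ a ∂ν, |(N a).real B - b| ≤ c) : |(ν.bind N).real B - b| ≤ c := by
  have hNB : Measurable fun a => N a B := (Measure.measurable_coe hB).comp hN
  have hint : Integrable (fun a => (N a).real B) ν :=
    .of_mem_Icc 0 1 hNB.ennreal_toReal.aemeasurable
      (.of_forall fun a => ⟨measureReal_nonneg, measureReal_le_one⟩)
  have hreal : (ν.bind N).real B = ∫ a, (N a).real B ∂ν := by
    simp only [Measure.real, Measure.bind_apply hB hN.aemeasurable]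
    rw [integral_toReal hNB.aemeasurable (.of_forall fun a => measure_lt_top _ _)]
  have hsub : (ν.bind N).real B - b = ∫ a, ((N a).real B - b) ∂ν := by
    rw [hreal, integral_sub hint (integrable_const b)]; simp
  rw [hsub]
  simpa using norm_integral_le_of_norm_le_const (μ := ν) (f := fun a => (N a).real B - b) h

theorem tendstoUniformlyOn_real_map {Ω : Type*} [MeasurableSpace Ω] {P : Measure Ω}
    [IsProbabilityMeasure P] {X : ℕ → Ω → S} {R : Kernel S S} [IsMarkovKernel R]
    (hR : ∀ n, 1 ≤ n → HasCondDistrib (X (n + 1)) (X n) R P) {π : Measure S} {c : ℕ → ℝ}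
    (hc : Tendsto c atTop (𝓝 0))
    (hπ : ∀ n, 1 ≤ n → ∀ᵐ ξ ∂P.map (X 1), ∀ B, MeasurableSet B →
      |(iterK R n ξ).real B - π.real B| ≤ c n) :
    TendstoUniformlyOn (fun n B => (P.map (X n)).real B) (fun B => π.real B) atTop
      {B | MeasurableSet B} := by
  have : IsProbabilityMeasure (P.map (X 1)) :=
    Measure.isProbabilityMeasure_map (hR 1 le_rfl).aemeasurable_fst
  rw [Metric.tendstoUniformlyOn_iff]
  intro ε hε
  filter_upwards [(tendsto_sub_atTop_nat 1).eventually (hc.eventually_lt_const hε),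
    eventually_ge_atTop 2] with n hn hn2 B hB
  obtain ⟨k, rfl⟩ := Nat.exists_eq_add_of_le' (one_le_two.trans hn2)
  rw [dist_comm, map_succ_eq_bind_iterK hR]
  exact (abs_real_bind_sub_le (measurable_iterK R.measurable k) hB
    ((hπ k (by omega)).mono fun ξ hξ => hξ B hB)).trans_lt hn

end IterK

section Average

lemma tendsto_inv_mul_sum_Icc {a : ℕ → ℝ} {L : ℝ} (ha : Tendsto a atTop (𝓝 L)) :
    Tendsto (fun n : ℕ => (n : ℝ)⁻¹ * ∑ j ∈ Finset.Icc 1 (n + 1), a j) atTop (𝓝 L) := by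
  have hshift : Tendsto (fun n => a (n + 1)) atTop (𝓝 L) := (tendsto_add_atTop_iff_nat 1).2 ha
  have hsum : Tendsto (fun n : ℕ => (n : ℝ)⁻¹ * ∑ i ∈ Finset.range n, a (i + 1) +
      (n : ℝ)⁻¹ * a (n + 1)) atTop (𝓝 L) := by
    simpa using hshift.cesaro.add (tendsto_inv_atTop_nhds_zero_nat.mul hshift)
  refine hsum.congr fun n => ?_
  rw [← mul_add, ← Finset.sum_range_succ (fun i => a (i + 1)), Finset.range_eq_Ico,
    Finset.sum_Ico_add' a 0 (n + 1) 1]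
  rfl

lemma tendsto_integral_inv_mul_sum_Icc {Ω : Type*} [MeasurableSpace Ω] {P : Measure Ω}
    {A : ℕ → Ω → ℝ} (hA : ∀ j, 1 ≤ j → Integrable (A j) P) {L : ℝ}
    (hL : Tendsto (fun j => ∫ ω, A j ω ∂P) atTop (𝓝 L)) :
    Tendsto (fun n : ℕ => ∫ ω, (n : ℝ)⁻¹ * ∑ j ∈ Finset.Icc 1 (n + 1), A j ω ∂P) atTop (𝓝 L) := by
  refine (tendsto_inv_mul_sum_Icc hL).congr fun n => ?_
  rw [integral_const_mul, integral_finsetSum _ fun j hj => hA j (Finset.mem_Icc.1 hj).1]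

end Average

section Rates

lemma tendsto_const_mul_rpow_neg_natCast (c : ℝ) {ρ : ℝ} (hρ : 1 < ρ) :
    Tendsto (fun n : ℕ => c * ρ ^ (-(n : ℝ))) atTop (𝓝 0) := by
  simpa using ((tendsto_rpow_atBot_of_base_gt_one ρ hρ).comp
    (tendsto_neg_atTop_atBot.comp tendsto_natCast_atTop_atTop)).const_mul c

lemma tendsto_const_mul_natCast_rpow_neg {c β : ℝ} (hc : 0 < c) (hβ : 0 < β) :
    Tendsto (fun n : ℕ => c * (n : ℝ) ^ (-β)) atTop (𝓝[>] 0) := by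
  refine tendsto_nhdsWithin_iff.2 ⟨?_, ?_⟩
  · simpa using ((tendsto_rpow_neg_atTop hβ).comp tendsto_natCast_atTop_atTop).const_mul c
  · filter_upwards [eventually_gt_atTop 0] with n hn
    exact mul_pos hc (Real.rpow_pos_of_pos (Nat.cast_pos.2 hn) _)

end Rates

theorem tendsto_integral_average_rescale {Ω V W : Type*} [MeasurableSpace Ω] {P : Measure Ω}
    [IsFiniteMeasure P]
    [NormedAddCommGroup V] [NormedSpace ℝ V] [FiniteDimensional ℝ V] [MeasurableSpace V]
    [BorelSpace V] {m : Measure V} [m.IsAddHaarMeasure]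
    [NormedAddCommGroup W] [NormedSpace ℝ W] [FiniteDimensional ℝ W] [MeasurableSpace W]
    [BorelSpace W] {m' : Measure W} [m'.IsAddHaarMeasure]
    {E : Set V} (hE : IsOpen E) {X : ℕ → Ω → V} {R : Kernel V V} [IsSFiniteKernel R]
    (hR : ∀ n, 1 ≤ n → HasCondDistrib (X (n + 1)) (X n) R P)
    {π : Measure V} [IsFiniteMeasure π]
    (hπ : TendstoUniformlyOn (fun n B => (P.map (X n)).real B) (fun B => π.real B) atTop
      {B | MeasurableSet B})
    {r : V → V → ℝ} (hr : Measurable (uncurry r)) (hr0 : ∀ a b, 0 ≤ r a b)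
    {C : ℝ} (hrC : ∀ a b, r a b ≤ C)
    (hRr : ∀ n, 1 ≤ n → ∀ᵐ a ∂P.map (X n),
      (R a).restrict E = (m.restrict E).withDensity fun b => ENNReal.ofReal (r a b))
    {Y : ℕ → Ω → W} {Q : Kernel V W} [IsSFiniteKernel Q]
    (hQ : ∀ n, 1 ≤ n → HasCondDistrib (Y n) (X n) Q P)
    {q : V → W → ℝ} (hq : Measurable (uncurry q)) (hq0 : ∀ a b, 0 ≤ q a b)
    (hQq : ∀ a, Q a = m'.withDensity fun b => ENNReal.ofReal (q a b))
    {G : V × W → ℝ} (hG : Measurable G) (hG0 : ∀ z, 0 ≤ G z) {CG : ℝ} (hGC : ∀ z, G z ≤ CG)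
    (hG1 : ∫ z, G z ∂m.prod m' = 1) {δ : ℝ} (hGδ : support G ⊆ Metric.ball 0 δ)
    {w : ℕ → ℝ} (hw : Tendsto w atTop (𝓝[>] 0)) {x : V} (hx : x ∈ E)
    (hrx : ∀ᵐ a ∂π, ContinuousAt (r a) x) {y : W} (hqxy : ContinuousAt (uncurry q) (x, y)) :
    Tendsto (fun n : ℕ => ∫ ω, (n : ℝ)⁻¹ * ∑ j ∈ Finset.Icc 1 (n + 1),
      rescale G (w j) (X j ω - x, Y j ω - y) ∂P) atTop (𝓝 ((∫ a, r a x ∂π) * q x y)) := by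
  have hmix (i : ℕ) : Measurable fun v => ∫ a, r a v ∂P.map (X (i + 1)) :=
    hr.stronglyMeasurable.integral_prod_left'.measurable
  have hrint (i : ℕ) (v : V) : Integrable (fun a => r a v) (P.map (X (i + 1))) :=
    .of_mem_Icc 0 C hr.of_uncurry_right.aemeasurable (.of_forall fun a => ⟨hr0 a v, hrC a v⟩)
  have hlaw (i : ℕ) : (P.map fun ω => (X (i + 2) ω, Y (i + 2) ω)).restrict (E ×ˢ univ) =
      ((m.prod m').restrict (E ×ˢ univ)).withDensity
        fun z => ENNReal.ofReal ((∫ a, r a z.1 ∂P.map (X (i + 1))) * q z.1 z.2) := by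
    rw [(hQ (i + 2) (by omega)).map_eq, map_eq_comp_of_hasCondDistrib (hR (i + 1) (by omega))]
    exact restrict_comp_compProd_eq_withDensity hE.measurableSet hr hr0 (hrint i)
      (hRr (i + 1) (by omega)) hq hQq
  have hlim := tendsto_integral_mul_prod_nhds
    (fun u hu => (tendsto_add_atTop_nat 1).eventually (hπ u hu))
    (fun v => hr.of_uncurry_right) hr0 hrC hrx hqxy
  have hterm := tendsto_integral_rescale_comp_sub hG hG0 hG1 hGδ
    (hw.comp (tendsto_add_atTop_nat 2)) (fun i => (hQ (i + 2) (by omega)).aemeasurable)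
    (hE.prod isOpen_univ) ⟨hx, mem_univ y⟩ (fun i => ((hmix i).comp measurable_fst).mul hq)
    (fun i z => mul_nonneg (integral_nonneg fun a => hr0 a z.1) (hq0 z.1 z.2)) hlaw hlim
  refine tendsto_integral_inv_mul_sum_Icc (fun j hj => ?_) ((tendsto_add_atTop_iff_nat 2).1 hterm)
  exact integrable_rescale_comp_sub hG (fun z => (abs_of_nonneg (hG0 z)).trans_le (hGC z)) _
    (hQ j hj).aemeasurable (x, y)

theorem stmt14_general {V : Type*} [NormedAddCommGroup V] [NormedSpace ℝ V]
    [FiniteDimensional ℝ V] [MeasurableSpace V] [BorelSpace V] {m : Measure V} [m.IsAddHaarMeasure]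
    {Ω : Type*} [MeasurableSpace Ω] {P : Measure Ω} [IsProbabilityMeasure P]
    {E : Set V} (hE : IsOpen E) {Zm : ℕ → Ω → V} (hZm : ∀ n, Measurable (Zm n))
    (hZmE : ∀ n, 1 ≤ n → ∀ ω, Zm n ω ∈ closure E)
    {R : V → Measure V} (hR1 : ∀ ξ, IsProbabilityMeasure (R ξ))
    (hR : ∀ B, MeasurableSet B → Measurable fun ξ => R ξ B)
    (hMarkov : ∀ n, 1 ≤ n → ∀ g : V → ℝ, Measurable g → (∃ C, ∀ u, |g u| ≤ C) →
      P[fun ω => g (Zm (n + 1) ω) | ⨆ i : Fin n, MeasurableSpace.comap (Zm (i.1 + 1)) inferInstance]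
        =ᵐ[P] fun ω => ∫ u, g u ∂(R (Zm n ω)))
    {π : Measure V} [IsFiniteMeasure π] {c : ℕ → ℝ} (hc : Tendsto c atTop (𝓝 0))
    (hTV : ∀ n, 1 ≤ n → ∀ ξ ∈ closure E, ∀ B, MeasurableSet B →
      |(iterK R n ξ).real B - π.real B| ≤ c n)
    {r : V → V → ℝ} (hr : Measurable (uncurry r)) (hr0 : ∀ a b, 0 ≤ r a b)
    {C : ℝ} (hrC : ∀ a b, r a b ≤ C)
    (hRr : ∀ ξ ∈ closure E, ∀ B ⊆ E, MeasurableSet B →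
      R ξ B = ∫⁻ z in B, ENNReal.ofReal (r ξ z) ∂m)
    {K : V → ℝ} (hK : Measurable K) (hK0 : ∀ v, 0 ≤ K v) {CK : ℝ} (hKC : ∀ v, K v ≤ CK)
    (hK1 : ∫ v, K v ∂m = 1) {δ : ℝ} (hKδ : support K ⊆ Metric.ball 0 δ)
    {Z : ℕ → Ω → V} (hZ : ∀ n, Measurable (Z n))
    {Q : V → Measure V} (hQ1 : ∀ ξ, IsProbabilityMeasure (Q ξ))
    {q : V → V → ℝ} (hq : Measurable (uncurry q)) (hq0 : ∀ a b, 0 ≤ q a b)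
    (hQq : ∀ ξ (B : Set V), MeasurableSet B → Q ξ B = ∫⁻ z in B, ENNReal.ofReal (q ξ z) ∂m)
    (hZcond : ∀ n, 1 ≤ n → ∀ g : V → ℝ, Measurable g → (∃ C, ∀ u, |g u| ≤ C) →
      P[fun ω => g (Z n ω) | (⨆ i : Fin n, MeasurableSpace.comap (Zm (i.1 + 1)) inferInstance) ⊔
          (⨆ i : Fin (n - 1), MeasurableSpace.comap (Z (i.1 + 1)) inferInstance)]
        =ᵐ[P] fun ω => ∫ u, g u ∂(Q (Zm n ω)))
    {w : ℕ → ℝ} (hw : Tendsto w atTop (𝓝[>] 0)) {x : V} (hx : x ∈ E)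
    (hrx : ∀ᵐ ξ ∂π, ContinuousAt (r ξ) x) {y : V} (hqxy : ContinuousAt (uncurry q) (x, y)) :
    Tendsto (fun n : ℕ => ∫ ω, (n : ℝ)⁻¹ * ∑ j ∈ Finset.Icc 1 (n + 1),
      rescale (prodKernel K K) (w j) (Zm j ω - x, Z j ω - y) ∂P) atTop
      (𝓝 ((∫ ξ, r ξ x ∂π) * q x y)) := by
  let Rκ : Kernel V V := ⟨R, Measure.measurable_of_measurable_coe _ hR⟩
  let Qκ : Kernel V V := ⟨Q, measurable_of_forall_eq_setLIntegral
    (f := fun ξ z => ENNReal.ofReal (q ξ z)) hq.ennreal_ofReal hQq⟩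
  have : IsMarkovKernel Rκ := ⟨hR1⟩
  have : IsMarkovKernel Qκ := ⟨hQ1⟩
  have hZm_le (n : ℕ) := iSup_comap_le fun i : Fin n => hZm (i.1 + 1)
  have hRκ (n : ℕ) (hn : 1 ≤ n) : HasCondDistrib (Zm (n + 1)) (Zm n) Rκ P :=
    hasCondDistrib_of_condExp (hZm_le n) (measurable_iSup_comap hn) (hZm _) (hMarkov n hn)
  have hQκ (n : ℕ) (hn : 1 ≤ n) : HasCondDistrib (Z n) (Zm n) Qκ P :=
    hasCondDistrib_of_condExp (sup_le (hZm_le n) (iSup_comap_le fun i => hZ _))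
      ((measurable_iSup_comap hn).mono le_sup_left le_rfl) (hZ n) (hZcond n hn)
  have hcl (n : ℕ) (hn : 1 ≤ n) := ae_map_mem_closure (P := P) (hZm n) (hZmE n hn)
  have hπ := tendstoUniformlyOn_real_map hRκ hc fun n hn => (hcl 1 le_rfl).mono (hTV n hn)
  exact tendsto_integral_average_rescale hE hRκ hπ hr hr0 hrC
    (fun n hn => (hcl n hn).mono fun ξ hξ =>
      restrict_eq_withDensity_of_forall_subset hE.measurableSet (hRr ξ hξ)) hQκ hq hq0
    (fun ξ => Measure.ext fun B hB => (hQq ξ B hB).trans (withDensity_apply _ hB).symm)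
    (measurable_prodKernel hK hK) (prodKernel_nonneg hK0 hK0) (prodKernel_le_mul hK0 hK0 hKC hKC)
    (by rw [integral_prodKernel, hK1, one_mul]) (support_prodKernel_subset_ball hKδ hKδ)
    hw hx hrx hqxy

theorem stmt14
    {d : ℕ} (hd : 1 ≤ d)
    {Ω : Type*} [MeasurableSpace Ω] (P : Measure Ω) [IsProbabilityMeasure P]
    (E : Set (EuclideanSpace ℝ (Fin d))) (hEopen : IsOpen E) (hEne : E.Nonempty)
    (Zm : ℕ → Ω → (EuclideanSpace ℝ (Fin d))) (hZmmeas : ∀ n, Measurable (Zm n))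
    (hZmmem : ∀ n, 1 ≤ n → ∀ ω, Zm n ω ∈ closure E)
    (R : (EuclideanSpace ℝ (Fin d)) → Measure (EuclideanSpace ℝ (Fin d))) (hRprob : ∀ ξ, IsProbabilityMeasure (R ξ))
    (hRkermeas : ∀ B : Set (EuclideanSpace ℝ (Fin d)), MeasurableSet B → Measurable fun ξ => R ξ B)
    (hMarkov : ∀ n, 1 ≤ n → ∀ g : (EuclideanSpace ℝ (Fin d)) → ℝ, Measurable g → (∃ C, ∀ u, |g u| ≤ C) →
      P[fun ω => g (Zm (n+1) ω)|⨆ i : Fin n, MeasurableSpace.comap (Zm (i.1+1)) inferInstance]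
        =ᵐ[P] fun ω => ∫ u, g u ∂(R (Zm n ω)))
    (μ : Measure (EuclideanSpace ℝ (Fin d))) (hμprob : IsProbabilityMeasure μ)
    (ε : ℝ) (hε : 0 < ε) (k : ℕ) (hk : 1 ≤ k)
    (hDoeblin : ∀ ξ ∈ closure E, ∀ B : Set (EuclideanSpace ℝ (Fin d)), MeasurableSet B →
      ENNReal.ofReal ε * μ B ≤ iterK R k ξ B)
    (π : Measure (EuclideanSpace ℝ (Fin d))) (hπprob : IsProbabilityMeasure π)
    (hπinv : ∀ B : Set (EuclideanSpace ℝ (Fin d)), MeasurableSet B → π B = ∫⁻ ξ, R ξ B ∂π)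
    (κ ρ : ℝ) (hκ : 0 < κ) (hρ : 1 < ρ)
    (hTV : ∀ n : ℕ, 1 ≤ n → ∀ ξ ∈ closure E, ∀ B : Set (EuclideanSpace ℝ (Fin d)), MeasurableSet B →
      |(iterK R n ξ B).toReal - (π B).toReal| ≤ κ * ρ ^ (-(n:ℝ)))
    (r : (EuclideanSpace ℝ (Fin d)) → (EuclideanSpace ℝ (Fin d)) → ℝ) (hrmeas : Measurable (Function.uncurry r)) (hrnonneg : ∀ a b, 0 ≤ r a b)
    (Cr : ℝ) (hrbdd : ∀ a b, r a b ≤ Cr)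
    (rLip : ℝ) (hrLip : ∀ a : (EuclideanSpace ℝ (Fin d)), ∀ b ∈ E, ∀ b' ∈ E, |r a b' - r a b| ≤ rLip * dist b' b)
    (hRdens : ∀ ξ ∈ closure E, ∀ B : Set (EuclideanSpace ℝ (Fin d)), B ⊆ E → MeasurableSet B →
      R ξ B = ∫⁻ z in B, ENNReal.ofReal (r ξ z) ∂volume)
    (p : (EuclideanSpace ℝ (Fin d)) → ℝ) (hp : ∀ z ∈ E, p z = ∫ u, r u z ∂π)
    (K : (EuclideanSpace ℝ (Fin d)) → ℝ) (hKmeas : Measurable K) (hKnonneg : ∀ z, 0 ≤ K z)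
    (CK : ℝ) (hKbdd : ∀ z, K z ≤ CK) (hKint : ∫ z, K z ∂volume = 1)
    (δ : ℝ) (hδ : 0 < δ) (hKsupp : Function.support K ⊆ Metric.ball 0 δ)
    (Z : ℕ → Ω → (EuclideanSpace ℝ (Fin d))) (hZmeas : ∀ n, Measurable (Z n)) (hZmem : ∀ n, 1 ≤ n → ∀ ω, Z n ω ∈ E)
    (Qm : (EuclideanSpace ℝ (Fin d)) → Measure (EuclideanSpace ℝ (Fin d))) (hQprob : ∀ ξ, IsProbabilityMeasure (Qm ξ))
    (q : (EuclideanSpace ℝ (Fin d)) → (EuclideanSpace ℝ (Fin d)) → ℝ) (hqmeas : Measurable (Function.uncurry q)) (hqnonneg : ∀ a b, 0 ≤ q a b)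
    (Cq : ℝ) (hqbdd : ∀ a b, q a b ≤ Cq)
    (qLip : ℝ) (hqLip1 : ∀ a b b' : (EuclideanSpace ℝ (Fin d)), |q a b' - q a b| ≤ qLip * dist b' b)
    (hqLip2 : ∀ a a' b : (EuclideanSpace ℝ (Fin d)), |q a' b - q a b| ≤ qLip * dist a' a)
    (hQdens : ∀ ξ : (EuclideanSpace ℝ (Fin d)), ∀ B : Set (EuclideanSpace ℝ (Fin d)), MeasurableSet B →
      Qm ξ B = ∫⁻ z in B, ENNReal.ofReal (q ξ z) ∂volume)
    (hZcond : ∀ n, 1 ≤ n → ∀ g : (EuclideanSpace ℝ (Fin d)) → ℝ, Measurable g → (∃ C, ∀ u, |g u| ≤ C) →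
      P[fun ω => g (Z n ω)|(⨆ i : Fin n, MeasurableSpace.comap (Zm (i.1+1)) inferInstance) ⊔
          (⨆ i : Fin (n-1), MeasurableSpace.comap (Z (i.1+1)) inferInstance)]
        =ᵐ[P] fun ω => ∫ u, g u ∂(Qm (Zm n ω)))
    (w1 Beta : ℝ) (hw1 : 0 < w1) (hBeta : 0 < Beta)
    (w : ℕ → ℝ) (hw : ∀ j : ℕ, w j = w1 * (j:ℝ) ^ (-Beta))
    (x y : (EuclideanSpace ℝ (Fin d))) (hx : x ∈ E) (hy : y ∈ E)
    (hxdist : w1 * δ < Metric.infDist x (frontier E))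
    (hydist : w1 * δ < Metric.infDist y (frontier E)) :
    Tendsto (fun n : ℕ => ∫ ω, ((n:ℝ)⁻¹ * ∑ j ∈ Finset.Icc 1 (n+1), ((w j) ^ (2*d))⁻¹ * (K ((w j)⁻¹ • (Zm j ω - x)) * K ((w j)⁻¹ • (Z j ω - y)))) ∂P) atTop (nhds (p x * q x y)) := by
  obtain rfl : w = fun j : ℕ => w1 * (j : ℝ) ^ (-Beta) := funext hw
  simpa [rescale, prodKernel, two_mul, hp x hx] using stmt14_general hEopen hZmmeas hZmmem hRprob
    hRkermeas hMarkov (tendsto_const_mul_rpow_neg_natCast κ hρ) hTV hrmeas hrnonneg hrbdd hRdens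
    hKmeas hKnonneg hKbdd hKint hKsupp hZmeas hQprob hqmeas hqnonneg hQdens hZcond
    (tendsto_const_mul_natCast_rpow_neg hw1 hBeta) hx
    (.of_forall fun ξ => continuousAt_of_abs_sub_le (hrLip ξ) (hEopen.mem_nhds hx))
    (continuous_uncurry_of_abs_sub_le hqLip2 hqLip1).continuousAt (y := y)
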